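/- arXiv:2010.10408 — 3 statements merged into one kernel-verified Lean document; each statement's English description precedes it below -/
import Mathlib

section
/- Let Δ ≥ 2 and let T be a Δ-postfix tree rooted at v with leaves v_1,…,v_Δ in postfix order. Let [a,b] be a nonempty proper subinterval of [Δ] with a = 1 or b = Δ, and let S := N_T(⋃_{i ∈ [Δ]\[a,b]} V(P_i)) be the [a,b]-separator of T, where P_i is the v_i–v path in T. Then no two distinct vertices of S have the same distance to the root v. -/
/-- A rooted tree on vertex type `α`, given by a parent function: the root is
its own parent and every vertex reaches the root by iterating `parent`. -/
structure RTree (α : Type*) where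
  root : α
  parent : α → α
  parent_root : parent root = root
  reaches_root : ∀ v, ∃ n, parent^[n] v = root

namespace RTree

variable {α : Type*} (T : RTree α)

/-- `v` is a descendant of `u` (possibly `v = u`). -/
def Desc (u v : α) : Prop := ∃ n, T.parent^[n] v = u

/-- The vertex set `V(P_v)` of the (unique) path from `v` to the root. -/
def pathSet (v : α) : Set α := { u | T.Desc u v }

/-- `w` is a child of `u`. -/
def IsChild (w u : α) : Prop := w ≠ T.root ∧ T.parent w = u

/-- A leaf is a vertex with no children. -/
def IsLeaf (v : α) : Prop := ∀ w, ¬ T.IsChild w v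

/-- Two vertices are adjacent in the (undirected) tree iff one is a child of
the other. -/
def Adj (u w : α) : Prop := T.IsChild u w ∨ T.IsChild w u

/-- The neighborhood `N_T(X)` of a vertex set `X`: vertices outside `X`
adjacent to some vertex of `X`. -/
def nbhd (X : Set α) : Set α := { v | v ∉ X ∧ ∃ u ∈ X, T.Adj v u }

/-- The depth of `v`: its distance to the root. -/
noncomputable def depth (v : α) : ℕ := sInf { n | T.parent^[n] v = T.root }

end RTree

/-- A `Δ`-postfix tree: a rooted full binary tree of depth at most `⌈log₂ Δ⌉`
whose leaves are exactly `leaf 1, …, leaf Δ`, listed in post order (for every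
vertex `u`, the set of indices of leaves below `u` is a set of consecutive
integers). -/
structure DeltaPostfixTree (α : Type*) (Δ : ℕ) extends RTree α where
  leaf : ℕ → α
  leaf_isLeaf : ∀ i ∈ Finset.Icc 1 Δ, toRTree.IsLeaf (leaf i)
  leaf_injOn : ∀ i ∈ Finset.Icc 1 Δ, ∀ j ∈ Finset.Icc 1 Δ, leaf i = leaf j → i = j
  leaf_surj : ∀ v, toRTree.IsLeaf v → ∃ i ∈ Finset.Icc 1 Δ, leaf i = v
  full_binary : ∀ v, ¬ toRTree.IsLeaf v →
    {w | toRTree.IsChild w v}.ncard = 2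
  depth_le : ∀ v, toRTree.depth v ≤ Nat.clog 2 Δ
  post_order : ∀ u, ∀ i ∈ Finset.Icc 1 Δ, ∀ j ∈ Finset.Icc 1 Δ, ∀ k ∈ Finset.Icc 1 Δ,
    i ≤ j → j ≤ k → toRTree.Desc u (leaf i) → toRTree.Desc u (leaf k) →
    toRTree.Desc u (leaf j)

/-- The `[a,b]`-separator of a `Δ`-postfix tree:
`S = N_T(⋃_{i ∈ [Δ] \ [a,b]} V(P_i))`, where `P_i` is the path from the `i`-th
leaf to the root. -/
def separator {α : Type*} {Δ : ℕ} (T : DeltaPostfixTree α Δ) (a b : ℕ) : Set α :=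
  T.toRTree.nbhd
    (⋃ i ∈ (Finset.Icc 1 Δ \ Finset.Icc a b), T.toRTree.pathSet (T.leaf i))

namespace RTree

variable {α : Type*} (T : RTree α)

lemma depth_spec (v : α) : T.parent^[T.depth v] v = T.root :=
  Nat.sInf_mem (s := { n | T.parent^[n] v = T.root }) (T.reaches_root v)

lemma depth_min {v : α} {n : ℕ} (h : T.parent^[n] v = T.root) : T.depth v ≤ n :=
  Nat.sInf_le (s := { n | T.parent^[n] v = T.root }) h

lemma eq_root_of_depth {v : α} (h : T.depth v = 0) : v = T.root := by
  have := T.depth_spec v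
  rw [h] at this
  simpa using this

lemma depth_root : T.depth T.root = 0 :=
  Nat.le_zero.mp (T.depth_min (n := 0) rfl)

lemma depth_parent (v : α) : T.depth (T.parent v) = T.depth v - 1 := by
  by_cases hv : v = T.root
  · subst hv
    rw [T.parent_root, T.depth_root]
  · have h0 : T.depth v ≠ 0 := fun h => hv (T.eq_root_of_depth h)
    have h1 : T.depth v ≤ T.depth (T.parent v) + 1 := by
      apply T.depth_min
      rw [Function.iterate_succ_apply]
      exact T.depth_spec _
    have h2 : T.depth (T.parent v) ≤ T.depth v - 1 := by
      apply T.depth_min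
      rw [← Function.iterate_succ_apply, Nat.succ_eq_add_one, Nat.sub_add_cancel (by omega)]
      exact T.depth_spec _
    omega

lemma depth_iterate (n : ℕ) (v : α) : T.depth (T.parent^[n] v) = T.depth v - n := by
  induction n with
  | zero => rfl
  | succ k ih =>
    rw [Function.iterate_succ_apply', T.depth_parent, ih]
    omega

lemma anc_unique {u w z : α} (hu : T.Desc u z) (hw : T.Desc w z)
    (h : T.depth u = T.depth w) : u = w := by
  obtain ⟨n, rfl⟩ := hu
  obtain ⟨m, rfl⟩ := hw
  by_cases h0 : T.depth (T.parent^[n] z) = 0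
  · exact (T.eq_root_of_depth h0).trans (T.eq_root_of_depth (h.symm.trans h0)).symm
  · rw [T.depth_iterate, T.depth_iterate] at h
    rw [T.depth_iterate] at h0
    have : n = m := by omega
    rw [this]

lemma Desc.parent {u v : α} (h : T.Desc u v) : T.Desc (T.parent u) v := by
  obtain ⟨n, rfl⟩ := h
  exact ⟨n + 1, Function.iterate_succ_apply' _ _ _⟩

lemma exists_leaf (N : ℕ) (hN : ∀ v, T.depth v ≤ N) :
    ∀ k v, N - T.depth v ≤ k → ∃ l, T.IsLeaf l ∧ T.Desc v l := by
  intro k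
  induction k with
  | zero =>
    intro v hk
    refine ⟨v, ?_, 0, rfl⟩
    rintro w ⟨hw, rfl⟩
    have h0 : T.depth w ≠ 0 := fun h => hw (T.eq_root_of_depth h)
    have := hN w
    rw [T.depth_parent] at hk
    omega
  | succ k ih =>
    intro v hk
    by_cases hl : T.IsLeaf v
    · exact ⟨v, hl, 0, rfl⟩
    · unfold IsLeaf at hl
      push Not at hl
      obtain ⟨w, hw, rfl⟩ := hl
      have h0 : T.depth w ≠ 0 := fun h => hw (T.eq_root_of_depth h)
      rw [T.depth_parent] at hk
      obtain ⟨l, hl, hd⟩ := ih w (by omega)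
      exact ⟨l, hl, Desc.parent T hd⟩

lemma desc_child {u l : α} (h : T.Desc u l) (hne : u ≠ l) :
    ∃ w, T.IsChild w u ∧ T.Desc w l := by
  classical
  obtain ⟨n, hn, hmin⟩ : ∃ n, T.parent^[n] l = u ∧ ∀ m < n, T.parent^[m] l ≠ u :=
    ⟨Nat.find h, Nat.find_spec h, fun m hm => Nat.find_min h hm⟩
  cases n with
  | zero => exact absurd hn.symm hne
  | succ k =>
    rw [Function.iterate_succ_apply'] at hn
    refine ⟨T.parent^[k] l, ⟨fun hr => ?_, hn⟩, k, rfl⟩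
    apply hmin k (Nat.lt_succ_self k)
    rw [hr, T.parent_root] at hn
    rw [hr, hn]

end RTree

/-- For a `Δ`-postfix tree `T` (`Δ ≥ 2`) and a nonempty proper
subinterval `[a,b]` of `[Δ]` with `a = 1` or `b = Δ`, no two distinct vertices of
the `[a,b]`-separator `S` have the same distance to the root. -/
theorem statement6 {α : Type*} [Fintype α] {Δ : ℕ} (hΔ : 2 ≤ Δ)
    (T : DeltaPostfixTree α Δ) (a b : ℕ) (ha : 1 ≤ a) (hab : a ≤ b) (hb : b ≤ Δ)
    (hend : a = 1 ∨ b = Δ) (hproper : ¬(a = 1 ∧ b = Δ)) :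
    ∀ x ∈ separator T a b, ∀ y ∈ separator T a b, x ≠ y →
      T.toRTree.depth x ≠ T.toRTree.depth y := by
  intro x hx y hy hxy hd
  have key : ∀ x ∈ separator T a b, x ≠ T.root ∧
      (∀ i ∈ Finset.Icc 1 Δ \ Finset.Icc a b, ¬ T.Desc x (T.leaf i)) ∧
      ∃ i ∈ Finset.Icc 1 Δ \ Finset.Icc a b, T.Desc (T.parent x) (T.leaf i) := by
    rintro x ⟨hx, u, hu, hadj⟩
    simp only [Set.mem_iUnion, RTree.pathSet, Set.mem_ofPred_eq, not_exists] at hx hu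
    obtain ⟨i, hi, hui⟩ := hu
    rcases hadj with ⟨hr, hp⟩ | ⟨hr, hp⟩
    · exact ⟨hr, fun i hi => hx i hi, i, hi, hp ▸ hui⟩
    · exact absurd (hp ▸ RTree.Desc.parent _ hui) (hx i hi)
  have key2 : ∃ c, ∀ x ∈ separator T a b, T.Desc (T.parent x) (T.leaf c) := by
    have main : ∀ x ∈ separator T a b, ∃ i ∈ Finset.Icc 1 Δ \ Finset.Icc a b,
        ∃ j ∈ Finset.Icc a b, T.Desc (T.parent x) (T.leaf i) ∧
          T.Desc (T.parent x) (T.leaf j) := by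
      intro x hx
      obtain ⟨-, hn, i, hi, hpi⟩ := key x hx
      obtain ⟨l, hl, hxl⟩ := T.toRTree.exists_leaf _ T.depth_le _ x le_rfl
      obtain ⟨j, hj, rfl⟩ := T.leaf_surj l hl
      refine ⟨i, hi, j, ?_, hpi, RTree.Desc.parent _ hxl⟩
      by_contra hc
      exact hn j (Finset.mem_sdiff.2 ⟨hj, hc⟩) hxl
    rcases hend with h | h
    · refine ⟨b, fun x hx => ?_⟩
      obtain ⟨i, hi, j, hj, h1, h2⟩ := main x hx
      simp only [Finset.mem_sdiff, Finset.mem_Icc] at hi hj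
      refine T.post_order _ j ?_ b ?_ i ?_ ?_ ?_ h2 h1 <;>
        (try simp only [Finset.mem_Icc]) <;> omega
    · refine ⟨a, fun x hx => ?_⟩
      obtain ⟨i, hi, j, hj, h1, h2⟩ := main x hx
      simp only [Finset.mem_sdiff, Finset.mem_Icc] at hi hj
      refine T.post_order _ i ?_ a ?_ j ?_ ?_ ?_ h1 h2 <;>
        (try simp only [Finset.mem_Icc]) <;> omega
  obtain ⟨c, hc⟩ := key2
  have hpar : T.parent x = T.parent y := by
    apply T.toRTree.anc_unique (hc x hx) (hc y hy)
    rw [RTree.depth_parent, RTree.depth_parent, hd]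
  obtain ⟨hxr, hxn, i, hi, hpi⟩ := key x hx
  obtain ⟨hyr, hyn, -⟩ := key y hy
  have hxc : T.IsChild x (T.parent x) := ⟨hxr, rfl⟩
  have hyc : T.IsChild y (T.parent x) := ⟨hyr, hpar.symm⟩
  have hnl : ¬ T.IsLeaf (T.parent x) := fun h => h x hxc
  obtain ⟨w, hw, hwd⟩ := T.toRTree.desc_child hpi (fun h => hnl (by
    rw [h]
    exact T.leaf_isLeaf i (Finset.mem_sdiff.1 hi).1))
  have hcard := T.full_binary _ hnl
  have heq : ({x, y} : Set α) = {w | T.IsChild w (T.parent x)} := by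
    apply Set.eq_of_subset_of_ncard_le
    · rintro z (rfl | rfl)
      · exact hxc
      · exact hyc
    · rw [hcard, Set.ncard_pair hxy]
    · exact Set.toFinite _
  have hw' : w ∈ ({x, y} : Set α) := heq ▸ hw
  rcases hw' with rfl | rfl
  · exact hxn i hi hwd
  · exact hyn i hi hwd
end

section
/- Let Δ ≥ 1, let 𝒢 = (V,(E_t)_{t=1}^τ) be a temporal graph with τ = LΔ for an integer L ≥ 1, and for each i ∈ [L] let ℳ_i be a family of Δ-temporal matchings of 𝒢[Δ(i−1)+1, Δi] that is i-complete for 𝒢. Define T_1[M] := |M| for M ∈ ℳ_1 and, for i > 1 and M ∈ ℳ_i, T_i[M] := max({ |M| + T_{i−1}[M'] : M' ∈ ℳ_{i−1} and M ∪ M' is a Δ-temporal matching of 𝒢 } ∪ {0}). Then for every k ∈ ℕ: there is a Δ-temporal matching of 𝒢 of size at least k if and only if max_{M ∈ ℳ_L} T_L[M] ≥ k. -/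
/-- A temporal graph on vertex set `V`: a lifetime `tau` and edge sets `E t`
(undirected edges, modeled as `Sym2 V`) for each time step. Only times
`1 ≤ t ≤ tau` give rise to time edges. -/
structure TemporalGraph (V : Type*) where
  tau : ℕ
  E : ℕ → Finset (Sym2 V)

variable {V : Type*}

/-- `(e, t)` is a time edge of `G`. -/
def IsTimeEdge (G : TemporalGraph V) (et : Sym2 V × ℕ) : Prop :=
  et.1 ∈ G.E et.2 ∧ 1 ≤ et.2 ∧ et.2 ≤ G.tau

/-- Two (undirected) edges share an endpoint. -/
def ShareEndpoint (e f : Sym2 V) : Prop := ∃ v, v ∈ e ∧ v ∈ f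

/-- Two time edges are `Δ`-independent: the edges share no endpoint,
or the time labels are at least `Δ` apart. -/
def DeltaIndep (Δ : ℕ) (x y : Sym2 V × ℕ) : Prop :=
  ¬ ShareEndpoint x.1 y.1 ∨ (Δ : ℤ) ≤ |(x.2 : ℤ) - (y.2 : ℤ)|

/-- A `Δ`-temporal matching of `G`: a set of time edges of `G` that are
pairwise `Δ`-independent. -/
def IsTemporalMatching (G : TemporalGraph V) (Δ : ℕ) (M : Finset (Sym2 V × ℕ)) : Prop :=
  (∀ et ∈ M, IsTimeEdge G et) ∧ ∀ x ∈ M, ∀ y ∈ M, x ≠ y → DeltaIndep Δ x y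

/-- `M[a,b]`: the time edges of `M` with time label between `a` and `b`. -/
def restrict (M : Finset (Sym2 V × ℕ)) (a b : ℕ) : Finset (Sym2 V × ℕ) :=
  M.filter (fun et => a ≤ et.2 ∧ et.2 ≤ b)

/-- `G[a,b]`: the temporal graph on `V` whose time edges are exactly those
time edges of `G` with time label between `a` and `b`. -/
def tgSlice (G : TemporalGraph V) (a b : ℕ) : TemporalGraph V :=
  { tau := G.tau, E := fun t => if a ≤ t ∧ t ≤ b then G.E t else ∅ }

/-- `ν` suffices as a `Δ`-vertex cover bound for `G`: every `Δ` consecutive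
layers can be covered by at most `ν` vertices. -/
def IsDeltaVC (G : TemporalGraph V) (Δ ν : ℕ) : Prop :=
  ∀ i, 1 ≤ i → i ≤ G.tau - Δ + 1 →
    ∃ S : Finset V, S.card ≤ ν ∧
      ∀ t ∈ Finset.Icc i (i + Δ - 1), ∀ e ∈ G.E t, ∃ v ∈ S, v ∈ e

/-- `ν` is the `Δ`-vertex cover number of `G` (the minimum such bound). -/
def IsDeltaVCNum (G : TemporalGraph V) (Δ ν : ℕ) : Prop :=
  IsDeltaVC G Δ ν ∧ ∀ μ, IsDeltaVC G Δ μ → ν ≤ μ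

/-- The maximum size of a `Δ`-temporal matching of `G`. -/
noncomputable def maxMatchingSize (G : TemporalGraph V) (Δ : ℕ) : ℕ :=
  sSup { k | ∃ M : Finset (Sym2 V × ℕ), IsTemporalMatching G Δ M ∧ M.card = k }

/-- A family `ℳ` of sets of time edges is `d`-complete for `G` (w.r.t. `Δ`):
for every `Δ`-temporal matching `M` of `G` there is `M' ∈ ℳ` such that
`(M \ M[Δ(d-1)+1, Δd]) ∪ M'` is a `Δ`-temporal matching of `G` of size at
least `|M|`. -/
def DComplete {V : Type*} [DecidableEq V] (G : TemporalGraph V) (Δ d : ℕ)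
    (ℳ : Finset (Finset (Sym2 V × ℕ))) : Prop :=
  ∀ M : Finset (Sym2 V × ℕ), IsTemporalMatching G Δ M →
    ∃ M' ∈ ℳ,
      IsTemporalMatching G Δ ((M \ restrict M (Δ * (d - 1) + 1) (Δ * d)) ∪ M') ∧
      M.card ≤ ((M \ restrict M (Δ * (d - 1) + 1) (Δ * d)) ∪ M').card

open Classical in
/-- The dynamic-programming table: `Ttab G Δ ℳ 1 M = |M|`, and for `i > 1`,
`Ttab G Δ ℳ i M = max({|M| + Ttab G Δ ℳ (i-1) M' : M' ∈ ℳ (i-1), M ∪ M' is a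
Δ-temporal matching of G} ∪ {0})`. (The value at `i = 0` is irrelevant.) -/
noncomputable def Ttab {V : Type*} [DecidableEq V] (G : TemporalGraph V) (Δ : ℕ)
    (ℳ : ℕ → Finset (Finset (Sym2 V × ℕ))) :
    ℕ → Finset (Sym2 V × ℕ) → ℕ
  | 0, M => M.card
  | 1, M => M.card
  | (i + 2), M =>
      ((ℳ (i + 1)).filter (fun M' => IsTemporalMatching G Δ (M ∪ M'))).sup
        (fun M' => M.card + Ttab G Δ ℳ (i + 1) M')

theorem slice_mem_bounds {G : TemporalGraph V} {Δ a b : ℕ} {M : Finset (Sym2 V × ℕ)}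
    (h : IsTemporalMatching (tgSlice G a b) Δ M) :
    IsTemporalMatching G Δ M ∧ ∀ x ∈ M, a ≤ x.2 ∧ x.2 ≤ b := by
  have key : ∀ x ∈ M, IsTimeEdge G x ∧ a ≤ x.2 ∧ x.2 ≤ b := by
    intro x hx
    have h1 := h.1 x hx
    unfold IsTimeEdge tgSlice at h1
    obtain ⟨h2, h3⟩ := h1
    by_cases hc : a ≤ x.2 ∧ x.2 ≤ b
    · simp only [hc, and_self, if_true] at h2
      exact ⟨⟨h2, h3⟩, hc⟩
    · simp [hc] at h2
  exact ⟨⟨fun x hx => (key x hx).1, h.2⟩, fun x hx => (key x hx).2⟩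

theorem matching_mono {G : TemporalGraph V} {Δ : ℕ} {M N : Finset (Sym2 V × ℕ)}
    (h : IsTemporalMatching G Δ N) (hs : M ⊆ N) : IsTemporalMatching G Δ M :=
  ⟨fun x hx => h.1 x (hs hx), fun x hx y hy => h.2 x (hs hx) y (hs hy)⟩

theorem deltaIndep_symm {Δ : ℕ} {x y : Sym2 V × ℕ}
    (h : DeltaIndep Δ x y) : DeltaIndep Δ y x := by
  rcases h with h | h
  · exact Or.inl fun ⟨v, h1, h2⟩ => h ⟨v, h2, h1⟩
  · right; rw [abs_sub_comm]; exact h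

theorem deltaIndep_of_far {Δ : ℕ} {x y : Sym2 V × ℕ}
    (h : y.2 + Δ ≤ x.2) : DeltaIndep Δ x y := by
  right
  refine le_trans ?_ (le_abs_self _)
  omega

theorem table_sound [DecidableEq V] (Δ L : ℕ) (G : TemporalGraph V)
    (ℳ : ℕ → Finset (Finset (Sym2 V × ℕ)))
    (hmatch : ∀ i ∈ Finset.Icc 1 L, ∀ M ∈ ℳ i,
      IsTemporalMatching (tgSlice G (Δ * (i - 1) + 1) (Δ * i)) Δ M) (i : ℕ) :
    i + 1 ≤ L → ∀ M ∈ ℳ (i + 1), ∃ N, IsTemporalMatching G Δ N ∧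
      (∀ x ∈ N, x ∈ M ∨ x.2 ≤ Δ * i) ∧ Ttab G Δ ℳ (i + 1) M ≤ N.card := by
  classical
  induction i with
  | zero =>
    intro hi M hM
    have h := slice_mem_bounds (hmatch 1 (by simp; omega) M hM)
    exact ⟨M, h.1, fun x hx => Or.inl hx, le_of_eq (by simp [Ttab])⟩
  | succ i ih =>
    intro hi M hM
    have hb := slice_mem_bounds (hmatch (i + 1 + 1) (by simp; omega) M hM)
    simp only [Nat.add_sub_cancel] at hb
    rcases Finset.eq_empty_or_nonempty
      ((ℳ (i + 1)).filter (fun M' => IsTemporalMatching G Δ (M ∪ M'))) with he | hne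
    · refine ⟨M, hb.1, fun x hx => Or.inl hx, ?_⟩
      rw [Ttab]
      simp only [he, Finset.sup_empty]
      exact Nat.zero_le _
    · obtain ⟨M', hM', heq⟩ := Finset.exists_mem_eq_sup _ hne
        (fun M' => M.card + Ttab G Δ ℳ (i + 1) M')
      rw [Finset.mem_filter] at hM'
      obtain ⟨hM', hU⟩ := hM'
      have hb' := slice_mem_bounds (hmatch (i + 1) (by simp; omega) M' hM')
      simp only [Nat.add_sub_cancel] at hb'
      obtain ⟨N, hN, hNM, hc⟩ := ih (by omega) M' hM'
      have e1 : Δ * (i + 1) = Δ * i + Δ := by ring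
      have cross : ∀ x ∈ M, ∀ y ∈ N, x ≠ y → DeltaIndep Δ x y := by
        intro x hx y hy hxy
        rcases hNM y hy with h | h
        · exact hU.2 x (Finset.mem_union_left _ hx) y (Finset.mem_union_right _ h) hxy
        · apply deltaIndep_of_far
          have := (hb.2 x hx).1
          omega
      have hNt : ∀ y ∈ N, y.2 ≤ Δ * (i + 1) := by
        intro y hy
        rcases hNM y hy with h | h
        · exact (hb'.2 y h).2
        · omega
      refine ⟨M ∪ N, ⟨?_, ?_⟩, ?_, ?_⟩
      · intro x hx
        rcases Finset.mem_union.1 hx with h | h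
        · exact hb.1.1 x h
        · exact hN.1 x h
      · intro x hx y hy hxy
        rcases Finset.mem_union.1 hx with h | h <;> rcases Finset.mem_union.1 hy with h' | h'
        · exact hb.1.2 x h y h' hxy
        · exact cross x h y h' hxy
        · exact deltaIndep_symm (cross y h' x h hxy.symm)
        · exact hN.2 x h y h' hxy
      · intro x hx
        rcases Finset.mem_union.1 hx with h | h
        · exact Or.inl h
        · exact Or.inr (hNt x h)
      · rw [Finset.card_union_of_disjoint]
        · have : Ttab G Δ ℳ (i + 1 + 1) M = M.card + Ttab G Δ ℳ (i + 1) M' := by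
            rw [Ttab]; exact heq
          omega
        · rw [Finset.disjoint_left]
          intro x hx hx'
          have := (hb.2 x hx).1
          have := hNt x hx'
          omega

theorem exists_normal [DecidableEq V] (Δ L : ℕ) (G : TemporalGraph V)
    (ℳ : ℕ → Finset (Finset (Sym2 V × ℕ)))
    (hmatch : ∀ i ∈ Finset.Icc 1 L, ∀ M ∈ ℳ i,
      IsTemporalMatching (tgSlice G (Δ * (i - 1) + 1) (Δ * i)) Δ M)
    (hcomp : ∀ i ∈ Finset.Icc 1 L, DComplete G Δ i (ℳ i))
    (M : Finset (Sym2 V × ℕ)) (hM : IsTemporalMatching G Δ M) (j : ℕ) :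
    j ≤ L → ∃ N, IsTemporalMatching G Δ N ∧ M.card ≤ N.card ∧
      ∀ i < j, restrict N (Δ * i + 1) (Δ * (i + 1)) ∈ ℳ (i + 1) := by
  induction j with
  | zero => intro _; exact ⟨M, hM, le_rfl, by simp⟩
  | succ j ih =>
    intro hj
    obtain ⟨N, hN, hc, hr⟩ := ih (by omega)
    have hmem : j + 1 ∈ Finset.Icc 1 L := by simp; omega
    obtain ⟨M', hM', h1, h2⟩ := hcomp (j + 1) hmem N hN
    have hb := (slice_mem_bounds (hmatch (j + 1) hmem M' hM')).2
    simp only [Nat.add_sub_cancel] at h1 h2 hb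
    refine ⟨_, h1, hc.trans h2, ?_⟩
    intro i hi
    rcases Nat.lt_succ_iff_lt_or_eq.1 hi with h | h
    · convert hr i h using 1
      have hle : Δ * (i + 1) ≤ Δ * j := Nat.mul_le_mul_left _ h
      ext x
      simp only [restrict, Finset.mem_filter, Finset.mem_union, Finset.mem_sdiff]
      constructor
      · rintro ⟨h | h, h'⟩
        · exact ⟨h.1, h'⟩
        · have := hb x h
          omega
      · rintro ⟨h, h'⟩
        refine ⟨Or.inl ⟨h, ?_⟩, h'⟩
        rintro ⟨_, h3⟩
        omega
    · subst h
      convert hM' using 1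
      ext x
      simp only [restrict, Finset.mem_filter, Finset.mem_union, Finset.mem_sdiff]
      constructor
      · rintro ⟨h | h, h'⟩
        · exact absurd ⟨h.1, h'⟩ h.2
        · exact h
      · intro h
        exact ⟨Or.inr h, hb x h⟩

theorem table_complete [DecidableEq V] (Δ L : ℕ) (G : TemporalGraph V)
    (ℳ : ℕ → Finset (Finset (Sym2 V × ℕ)))
    (N : Finset (Sym2 V × ℕ)) (hN : IsTemporalMatching G Δ N)
    (hr : ∀ i < L, restrict N (Δ * i + 1) (Δ * (i + 1)) ∈ ℳ (i + 1)) (i : ℕ) :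
    i < L → (restrict N 1 (Δ * (i + 1))).card ≤
      Ttab G Δ ℳ (i + 1) (restrict N (Δ * i + 1) (Δ * (i + 1))) := by
  classical
  induction i with
  | zero => intro _; simp [Ttab]
  | succ i ih =>
    intro hi
    have h1 := ih (by omega)
    have hmem : restrict N (Δ * i + 1) (Δ * (i + 1)) ∈ (ℳ (i + 1)).filter (fun M' =>
        IsTemporalMatching G Δ (restrict N (Δ * (i + 1) + 1) (Δ * (i + 1 + 1)) ∪ M')) := by
      rw [Finset.mem_filter]
      refine ⟨hr i (by omega), matching_mono hN ?_⟩
      exact Finset.union_subset (Finset.filter_subset _ _) (Finset.filter_subset _ _)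
    have h2 := Finset.le_sup (f := fun M' =>
      (restrict N (Δ * (i + 1) + 1) (Δ * (i + 1 + 1))).card + Ttab G Δ ℳ (i + 1) M') hmem
    have h3 : (restrict N 1 (Δ * (i + 1 + 1))).card ≤
        (restrict N (Δ * (i + 1) + 1) (Δ * (i + 1 + 1))).card +
        (restrict N 1 (Δ * (i + 1))).card := by
      refine le_trans (Finset.card_le_card ?_) (Finset.card_union_le _ _)
      intro x hx
      simp only [restrict, Finset.mem_filter, Finset.mem_union] at hx ⊢
      by_cases h : x.2 ≤ Δ * (i + 1)
      · exact Or.inr ⟨hx.1, hx.2.1, h⟩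
      · exact Or.inl ⟨hx.1, by omega, hx.2.2⟩
    have h4 : (restrict N (Δ * (i + 1) + 1) (Δ * (i + 1 + 1))).card +
        Ttab G Δ ℳ (i + 1) (restrict N (Δ * i + 1) (Δ * (i + 1))) ≤
        Ttab G Δ ℳ (i + 1 + 1) (restrict N (Δ * (i + 1) + 1) (Δ * (i + 1 + 1))) := by
      rw [Ttab.eq_3]; exact h2
    omega

/-- Let `tau = L·Δ` and for each `i ∈ [L]` let `ℳ i` be a
family of `Δ`-temporal matchings of `G[Δ(i-1)+1, Δi]` which is `i`-complete for
`G`. Then for every `k`, `G` has a `Δ`-temporal matching of size at least `k`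
iff `max_{M ∈ ℳ L} T_L[M] ≥ k`. -/
theorem statement11 {V : Type*} [DecidableEq V] (Δ L : ℕ) (hΔ : 1 ≤ Δ) (hL : 1 ≤ L)
    (G : TemporalGraph V) (htau : G.tau = L * Δ)
    (ℳ : ℕ → Finset (Finset (Sym2 V × ℕ)))
    (hmatch : ∀ i ∈ Finset.Icc 1 L, ∀ M ∈ ℳ i,
      IsTemporalMatching (tgSlice G (Δ * (i - 1) + 1) (Δ * i)) Δ M)
    (hcomp : ∀ i ∈ Finset.Icc 1 L, DComplete G Δ i (ℳ i)) :
    ∀ k : ℕ,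
      (∃ M : Finset (Sym2 V × ℕ), IsTemporalMatching G Δ M ∧ k ≤ M.card) ↔
        k ≤ (ℳ L).sup (fun M => Ttab G Δ ℳ L M) := by
  intro k
  obtain ⟨l, rfl⟩ : ∃ l, L = l + 1 := ⟨L - 1, by omega⟩
  constructor
  · rintro ⟨M, hM, hk⟩
    obtain ⟨N, hN, hc, hr⟩ := exists_normal Δ (l + 1) G ℳ hmatch hcomp M hM (l + 1) le_rfl
    have h1 := table_complete Δ (l + 1) G ℳ N hN hr l (by omega)
    have h2 : restrict N 1 (Δ * (l + 1)) = N := by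
      apply Finset.filter_true_of_mem
      intro x hx
      have h := (hN.1 x hx).2
      rw [htau, Nat.mul_comm] at h
      exact h
    rw [h2] at h1
    exact (hk.trans (hc.trans h1)).trans
      (Finset.le_sup (f := fun M => Ttab G Δ ℳ (l + 1) M) (hr l (by omega)))
  · intro hk
    rcases Finset.eq_empty_or_nonempty (ℳ (l + 1)) with he | hne
    · refine ⟨∅, ⟨by simp, by simp⟩, ?_⟩
      simpa [he] using hk
    · obtain ⟨M, hM, heq⟩ := Finset.exists_mem_eq_sup _ hne (fun M => Ttab G Δ ℳ (l + 1) M)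
      obtain ⟨N, hN, _, hc⟩ := table_sound Δ (l + 1) G ℳ hmatch l le_rfl M hM
      exact ⟨N, hN, (hk.trans (le_of_eq heq)).trans hc⟩
end

section
/- Let Δ ≥ 1, let 𝒢 = (V,(E_t)_{t=1}^τ) be a temporal graph with τ = LΔ for an integer L ≥ 1, and for each i ∈ [L] let ℳ_i be a family of Δ-temporal matchings of 𝒢[Δ(i−1)+1, Δi] that is i-complete for 𝒢. Define T_1[M] := |M| for M ∈ ℳ_1 and, for i > 1 and M ∈ ℳ_i, T_i[M] := max({ |M| + T_{i−1}[M'] : M' ∈ ℳ_{i−1} and M ∪ M' is a Δ-temporal matching of 𝒢 } ∪ {0}). Then for every i ∈ [L], max_{M ∈ ℳ_i} T_i[M] equals the maximum size of a Δ-temporal matching of 𝒢[1, Δi]. -/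
variable {V : Type*}

theorem slice_timeEdge (G : TemporalGraph V) (a b : ℕ) (x : Sym2 V × ℕ) :
    IsTimeEdge (tgSlice G a b) x ↔ IsTimeEdge G x ∧ a ≤ x.2 ∧ x.2 ≤ b := by
  unfold IsTimeEdge tgSlice
  by_cases h : a ≤ x.2 ∧ x.2 ≤ b <;> simp [h]

theorem tm_mono {G : TemporalGraph V} {Δ : ℕ} {M N : Finset (Sym2 V × ℕ)}
    (hN : IsTemporalMatching G Δ N) (h : M ⊆ N) : IsTemporalMatching G Δ M :=
  ⟨fun x hx => hN.1 x (h hx), fun x hx y hy hxy => hN.2 x (h hx) y (h hy) hxy⟩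

theorem deltaIndep_far {Δ : ℕ} {x y : Sym2 V × ℕ} (h : x.2 + Δ ≤ y.2 ∨ y.2 + Δ ≤ x.2) :
    DeltaIndep Δ x y := by
  right
  rcases h with h | h
  · rw [abs_sub_comm]; exact le_trans (by omega) (le_abs_self _)
  · exact le_trans (by omega) (le_abs_self _)

theorem size_bdd [DecidableEq V] (G : TemporalGraph V) (Δ : ℕ) :
    BddAbove { k | ∃ M : Finset (Sym2 V × ℕ), IsTemporalMatching G Δ M ∧ M.card = k } := by
  refine ⟨(((Finset.Icc 1 G.tau).biUnion G.E) ×ˢ (Finset.Icc 1 G.tau)).card, ?_⟩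
  rintro k ⟨M, hM, rfl⟩
  apply Finset.card_le_card
  intro x hx
  obtain ⟨h1, h2, h3⟩ := hM.1 x hx
  simp only [Finset.mem_product, Finset.mem_biUnion, Finset.mem_Icc]
  exact ⟨⟨x.2, ⟨h2, h3⟩, h1⟩, h2, h3⟩

theorem ttab_upper [DecidableEq V] (Δ L : ℕ) (G : TemporalGraph V)
    (ℳ : ℕ → Finset (Finset (Sym2 V × ℕ)))
    (hmatch : ∀ i ∈ Finset.Icc 1 L, ∀ M ∈ ℳ i,
      IsTemporalMatching (tgSlice G (Δ * (i - 1) + 1) (Δ * i)) Δ M) (k : ℕ) :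
    k + 1 ≤ L → ∀ M ∈ ℳ (k + 1), ∃ N, IsTemporalMatching (tgSlice G 1 (Δ * (k + 1))) Δ N ∧
      (∀ x ∈ N, Δ * k < x.2 → x ∈ M) ∧ Ttab G Δ ℳ (k + 1) M ≤ N.card := by
  induction k with
  | zero =>
    intro hk M hM
    refine ⟨M, ?_, fun x hx _ => hx, le_of_eq rfl⟩
    simpa using hmatch 1 (by simp; omega) M hM
  | succ k ih =>
    intro hk M hM
    have hMm := hmatch (k + 2) (by simp; omega) M hM
    have hMt : ∀ x ∈ M, IsTimeEdge G x ∧ Δ * (k + 1) + 1 ≤ x.2 ∧ x.2 ≤ Δ * (k + 2) :=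
      fun x hx => (slice_timeEdge _ _ _ _).1 (hMm.1 x hx)
    classical
    rcases Nat.eq_zero_or_pos (Ttab G Δ ℳ (k + 1 + 1) M) with h0 | hpos
    · exact ⟨∅, ⟨by simp, by simp⟩, by simp, by simp [h0]⟩
    · have hne : ((ℳ (k + 1)).filter (fun M' => IsTemporalMatching G Δ (M ∪ M'))).Nonempty := by
        by_contra hcon
        rw [Finset.not_nonempty_iff_eq_empty] at hcon
        have : Ttab G Δ ℳ (k + 1 + 1) M = 0 := by
          rw [Ttab]
          rw [hcon]
          rfl
        omega
      obtain ⟨M', hM', hsup⟩ := Finset.exists_mem_eq_sup _ hne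
        (fun M' => M.card + Ttab G Δ ℳ (k + 1) M')
      have hT : Ttab G Δ ℳ (k + 1 + 1) M = M.card + Ttab G Δ ℳ (k + 1) M' := by
        rw [← hsup, Ttab]
      rw [Finset.mem_filter] at hM'
      obtain ⟨N, hN, hNM, hNT⟩ := ih (by omega) M' hM'.1
      have hNt : ∀ x ∈ N, IsTimeEdge G x ∧ 1 ≤ x.2 ∧ x.2 ≤ Δ * (k + 1) :=
        fun x hx => (slice_timeEdge _ _ _ _).1 (hN.1 x hx)
      have e1 : Δ * (k + 1) = Δ * k + Δ := by ring
      have e2 : Δ * (k + 2) = Δ * k + Δ + Δ := by ring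
      have e3 : Δ * (k + 1 + 1) = Δ * k + Δ + Δ := by ring
      have cross : ∀ x ∈ M, ∀ y ∈ N, x ≠ y → DeltaIndep Δ x y ∧ DeltaIndep Δ y x := by
        intro x hx y hy hxy
        have hx' := hMt x hx
        by_cases hyt : Δ * k < y.2
        · have hyM := hNM y hy hyt
          exact ⟨hM'.2.2 x (Finset.mem_union_left _ hx) y (Finset.mem_union_right _ hyM) hxy,
            hM'.2.2 y (Finset.mem_union_right _ hyM) x (Finset.mem_union_left _ hx) hxy.symm⟩
        · exact ⟨deltaIndep_far (by omega), deltaIndep_far (by omega)⟩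
      refine ⟨M ∪ N, ⟨?_, ?_⟩, ?_, ?_⟩
      · intro x hx
        rw [slice_timeEdge]
        rcases Finset.mem_union.1 hx with hx | hx
        · have := hMt x hx
          exact ⟨this.1, by omega, by omega⟩
        · have := hNt x hx
          exact ⟨this.1, by omega, by omega⟩
      · intro x hx y hy hxy
        rcases Finset.mem_union.1 hx with hx | hx <;> rcases Finset.mem_union.1 hy with hy | hy
        · exact hMm.2 x hx y hy hxy
        · exact (cross x hx y hy hxy).1
        · exact (cross y hy x hx hxy.symm).2
        · exact hN.2 x hx y hy hxy
      · intro x hx hxt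
        rcases Finset.mem_union.1 hx with hx | hx
        · exact hx
        · have := hNt x hx
          omega
      · rw [Finset.card_union_of_disjoint, hT]
        · omega
        · rw [Finset.disjoint_left]
          intro x hx hx'
          have := hMt x hx
          have := hNt x hx'
          omega

theorem ttab_lower [DecidableEq V] (Δ L : ℕ) (G : TemporalGraph V)
    (ℳ : ℕ → Finset (Finset (Sym2 V × ℕ)))
    (hmatch : ∀ i ∈ Finset.Icc 1 L, ∀ M ∈ ℳ i,
      IsTemporalMatching (tgSlice G (Δ * (i - 1) + 1) (Δ * i)) Δ M)
    (hcomp : ∀ i ∈ Finset.Icc 1 L, DComplete G Δ i (ℳ i))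
    (N : Finset (Sym2 V × ℕ)) (hN : IsTemporalMatching G Δ N) (k : ℕ) :
    k + 1 ≤ L → ∃ N', IsTemporalMatching G Δ N' ∧ N.card ≤ N'.card ∧
      (∀ x ∈ N', Δ * (k + 1) < x.2 → x ∈ N) ∧
      ∃ M ∈ ℳ (k + 1), M ⊆ N' ∧
        (restrict N' 1 (Δ * (k + 1))).card ≤ Ttab G Δ ℳ (k + 1) M := by
  induction k with
  | zero =>
    intro hk
    obtain ⟨M, hM, h1, h2⟩ := hcomp 1 (by simp; omega) N hN
    have hMt : ∀ x ∈ M, IsTimeEdge G x ∧ Δ * 0 + 1 ≤ x.2 ∧ x.2 ≤ Δ * 1 :=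
      fun x hx => (slice_timeEdge _ _ _ _).1 ((hmatch 1 (by simp; omega) M hM).1 x hx)
    refine ⟨_, h1, h2, ?_, M, hM, Finset.subset_union_right, ?_⟩
    · intro x hx hxt
      rcases Finset.mem_union.1 hx with hx | hx
      · exact (Finset.mem_sdiff.1 hx).1
      · have := hMt x hx
        omega
    · change _ ≤ M.card
      apply Finset.card_le_card
      intro x hx
      simp only [restrict, Finset.mem_filter, Finset.mem_union, Finset.mem_sdiff] at hx
      obtain ⟨hx | hx, h3⟩ := hx
      · exact absurd ⟨hx.1, by simpa using h3⟩ hx.2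
      · exact hx
  | succ k ih =>
    intro hk
    obtain ⟨N₁, hN₁, hc, hlate, M₁, hM₁, hsub, hT⟩ := ih (by omega)
    obtain ⟨M, hM, h1, h2⟩ := hcomp (k + 2) (by simp; omega) N₁ hN₁
    have hMt : ∀ x ∈ M, IsTimeEdge G x ∧ Δ * (k + 1) + 1 ≤ x.2 ∧ x.2 ≤ Δ * (k + 2) :=
      fun x hx => (slice_timeEdge _ _ _ _).1 ((hmatch (k + 2) (by simp; omega) M hM).1 x hx)
    have hMt₁ : ∀ x ∈ M₁, IsTimeEdge G x ∧ Δ * k + 1 ≤ x.2 ∧ x.2 ≤ Δ * (k + 1) :=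
      fun x hx => (slice_timeEdge _ _ _ _).1 ((hmatch (k + 1) (by simp; omega) M₁ hM₁).1 x hx)
    have e1 : Δ * (k + 1) = Δ * k + Δ := by ring
    have e2 : Δ * (k + 2) = Δ * k + Δ + Δ := by ring
    have e3 : Δ * (k + 1 + 1) = Δ * k + Δ + Δ := by ring
    have e4 : Δ * (k + 2 - 1) = Δ * k + Δ := by rw [← e1]; rfl
    refine ⟨_, h1, hc.trans h2, ?_, M, hM, Finset.subset_union_right, ?_⟩
    · intro x hx hxt
      rcases Finset.mem_union.1 hx with hx | hx
      · exact hlate x (Finset.mem_sdiff.1 hx).1 (by omega)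
      · have := hMt x hx
        omega
    · have hcompat : IsTemporalMatching G Δ (M ∪ M₁) := by
        refine tm_mono h1 ?_
        intro x hx
        rcases Finset.mem_union.1 hx with hx | hx
        · exact Finset.mem_union_right _ hx
        · apply Finset.mem_union_left
          rw [Finset.mem_sdiff]
          refine ⟨hsub hx, fun h => ?_⟩
          have h5 := (Finset.mem_filter.1 h).2
          have := hMt₁ x hx
          omega
      have hle : M.card + Ttab G Δ ℳ (k + 1) M₁ ≤ Ttab G Δ ℳ (k + 1 + 1) M := by
        classical
        rw [Ttab]
        exact Finset.le_sup (f := fun M' => M.card + Ttab G Δ ℳ (k + 1) M')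
          (Finset.mem_filter.2 ⟨hM₁, hcompat⟩)
      refine le_trans ?_ hle
      refine le_trans ?_ (Nat.add_le_add_left hT _)
      refine le_trans (Finset.card_le_card ?_) (Finset.card_union_le _ _)
      intro x hx
      simp only [restrict, Finset.mem_filter, Finset.mem_union, Finset.mem_sdiff] at hx ⊢
      obtain ⟨hx | hx, h3⟩ := hx
      · right
        refine ⟨hx.1, h3.1, ?_⟩
        by_contra hcon
        exact hx.2 ⟨hx.1, by omega, by omega⟩
      · exact Or.inl hx

/-- Let `tau = L·Δ` and for each `i ∈ [L]` let `ℳ i` be a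
family of `Δ`-temporal matchings of `G[Δ(i-1)+1, Δi]` which is `i`-complete for
`G`. Then for every `i ∈ [L]`, `max_{M ∈ ℳ i} T_i[M]` equals the maximum size
of a `Δ`-temporal matching of `G[1, Δi]`. -/
theorem statement12 {V : Type*} [DecidableEq V] (Δ L : ℕ) (hΔ : 1 ≤ Δ) (hL : 1 ≤ L)
    (G : TemporalGraph V) (htau : G.tau = L * Δ)
    (ℳ : ℕ → Finset (Finset (Sym2 V × ℕ)))
    (hmatch : ∀ i ∈ Finset.Icc 1 L, ∀ M ∈ ℳ i,
      IsTemporalMatching (tgSlice G (Δ * (i - 1) + 1) (Δ * i)) Δ M)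
    (hcomp : ∀ i ∈ Finset.Icc 1 L, DComplete G Δ i (ℳ i)) :
    ∀ i ∈ Finset.Icc 1 L,
      (ℳ i).sup (fun M => Ttab G Δ ℳ i M) =
        maxMatchingSize (tgSlice G 1 (Δ * i)) Δ := by
  intro i hi
  obtain ⟨hi1, hi2⟩ := Finset.mem_Icc.1 hi
  obtain ⟨k, rfl⟩ : ∃ k, i = k + 1 := ⟨i - 1, by omega⟩
  apply le_antisymm
  · apply Finset.sup_le
    intro M hM
    obtain ⟨N, hN, _, hT⟩ := ttab_upper Δ L G ℳ hmatch k hi2 M hM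
    exact hT.trans (le_csSup (size_bdd _ _) ⟨N, hN, rfl⟩)
  · unfold maxMatchingSize
    refine csSup_le ⟨0, ∅, ⟨by simp, by simp⟩, by simp⟩ ?_
    rintro _ ⟨N, hN, rfl⟩
    have hNt : ∀ x ∈ N, IsTimeEdge G x ∧ 1 ≤ x.2 ∧ x.2 ≤ Δ * (k + 1) :=
      fun x hx => (slice_timeEdge _ _ _ _).1 (hN.1 x hx)
    obtain ⟨N', hN', hc, hlate, M, hM, _, hT⟩ := ttab_lower Δ L G ℳ hmatch hcomp N
      ⟨fun x hx => (hNt x hx).1, hN.2⟩ k hi2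
    refine le_trans (hc.trans (le_trans (Finset.card_le_card ?_) hT))
      (Finset.le_sup (f := fun M => Ttab G Δ ℳ (k + 1) M) hM)
    intro x hx
    refine Finset.mem_filter.2 ⟨hx, (hN'.1 x hx).2.1, ?_⟩
    by_contra hcon
    have := hNt x (hlate x hx (by omega))
    omega
end
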